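/- arXiv:2112.14687 — 4 statements merged into one kernel-verified Lean document; each statement's English description precedes it below -/
import Mathlib

section
/- Let K be a field, let q be an invertible element of K, let A be an associative unital K-algebra, and let x, y be units of A satisfying x·y = q²·(y·x). For α = (α₁, α₂) ∈ ℤ² define W(α) = q^{−α₁α₂}·x^{α₁}·y^{α₂}. Then for all α, β ∈ ℤ² the commutator satisfies W(α)·W(β) − W(β)·W(α) = (q^{α₁β₂ − α₂β₁} − q^{−(α₁β₂ − α₂β₁)})·W(α + β). -/
/-- If `x * y = z * (y * x)` with `z` commuting with `x` and `y`, then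
`x ^ m * y ^ n = z ^ (m * n) * (y ^ n * x ^ m)` for all integers `m`, `n`. -/
theorem zpow_mul_zpow_of_mul_eq_central_mul {G : Type*} [Group G] {x y z : G}
    (hzx : Commute z x) (hzy : Commute z y) (h : x * y = z * (y * x)) (m n : ℤ) :
    x ^ m * y ^ n = z ^ (m * n) * (y ^ n * x ^ m) := by
  have hn : x * y ^ n = z ^ n * (y ^ n * x) := by
    have hs : SemiconjBy x y (z * y) := by rw [SemiconjBy, h, mul_assoc]
    have := (hs.zpow_right n).eq
    rwa [hzy.mul_zpow, mul_assoc] at this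
  have hs : SemiconjBy (y ^ n) (z ^ n * x) x := by
    rw [SemiconjBy, hn, ← mul_assoc, ← mul_assoc, (hzy.zpow_zpow n n).eq]
  have := (hs.zpow_right m).eq
  rw [(hzx.zpow_left n).mul_zpow, ← zpow_mul, ← mul_assoc,
    ← (hzy.zpow_zpow (n * m) n).eq, mul_assoc, mul_comm n m] at this
  exact this.symm

/-- Multiplication of normalized monomials: if `x * y = c ^ 2 * (y * x)` with `c` commuting with
`x` and `y`, the monomials `c ^ (-(a₁ * a₂)) * (x ^ a₁ * y ^ a₂)` multiply with the
cocycle `c ^ (a₁ * b₂ - a₂ * b₁)`. -/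
theorem normalized_monomial_mul {G : Type*} [Group G] {x y c : G}
    (hcx : Commute c x) (hcy : Commute c y) (h : x * y = c ^ 2 * (y * x)) (a₁ a₂ b₁ b₂ : ℤ) :
    c ^ (-(a₁ * a₂)) * (x ^ a₁ * y ^ a₂) * (c ^ (-(b₁ * b₂)) * (x ^ b₁ * y ^ b₂)) =
      c ^ (a₁ * b₂ - a₂ * b₁) *
        (c ^ (-((a₁ + b₁) * (a₂ + b₂))) * (x ^ (a₁ + b₁) * y ^ (a₂ + b₂))) := by
  have hyx : y ^ a₂ * x ^ b₁ = c ^ (-(2 * (a₂ * b₁))) * (x ^ b₁ * y ^ a₂) := by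
    rw [zpow_mul_zpow_of_mul_eq_central_mul (hcx.pow_left 2) (hcy.pow_left 2) h b₁ a₂,
      ← mul_assoc, ← zpow_natCast c 2, ← zpow_mul, ← zpow_add]
    have : -(2 * (a₂ * b₁)) + ((2 : ℕ) : ℤ) * (b₁ * a₂) = 0 := by push_cast; ring
    rw [this, zpow_zero, one_mul]
  have hc (k : ℤ) : Commute (c ^ k) (x ^ a₁ * y ^ a₂) :=
    (hcx.zpow_zpow k a₁).mul_right (hcy.zpow_zpow k a₂)
  calc
    _ = c ^ (-(a₁ * a₂)) * ((x ^ a₁ * y ^ a₂) * c ^ (-(b₁ * b₂))) * (x ^ b₁ * y ^ b₂) := by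
      simp only [mul_assoc]
    _ = c ^ (-(a₁ * a₂)) * c ^ (-(b₁ * b₂)) * (x ^ a₁ * (y ^ a₂ * x ^ b₁) * y ^ b₂) := by
      rw [← (hc _).eq]; simp only [mul_assoc]
    _ = c ^ (-(a₁ * a₂)) * c ^ (-(b₁ * b₂)) *
        ((x ^ a₁ * c ^ (-(2 * (a₂ * b₁)))) * (x ^ b₁ * y ^ a₂) * y ^ b₂) := by
      rw [hyx]; simp only [mul_assoc]
    _ = c ^ (-(a₁ * a₂)) * c ^ (-(b₁ * b₂)) * c ^ (-(2 * (a₂ * b₁))) *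
        (x ^ (a₁ + b₁) * y ^ (a₂ + b₂)) := by
      rw [← (hcx.zpow_zpow _ a₁).eq, zpow_add x, zpow_add y]; simp only [mul_assoc]
    _ = _ := by
      rw [← mul_assoc (c ^ (a₁ * b₂ - a₂ * b₁)), ← zpow_add, ← zpow_add, ← zpow_add]
      congr 2
      ring


/-- **Quantum torus commutator relation.**
`K` a field, `q` an invertible scalar, `A` an associative unital `K`-algebra, and
`x, y` units of `A` with `x * y = q ^ 2 • (y * x)`.  For `α = (α₁, α₂) ∈ ℤ²` set
`W α = q ^ (-α₁ α₂) • x ^ α₁ * y ^ α₂`.  Then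
`W α * W β - W β * W α = (q ^ (α × β) - q ^ (-(α × β))) • W (α + β)`,
where `α × β = α₁ β₂ - α₂ β₁` is the two-dimensional cross product. -/
theorem quantum_torus_commutator {K A : Type*} [Field K] [Ring A] [Algebra K A]
    (q : Kˣ) (x y : Aˣ)
    (hxy : (x : A) * (y : A) = ((q : K) ^ 2) • ((y : A) * (x : A)))
    (W : ℤ × ℤ → A)
    (hW : ∀ γ : ℤ × ℤ,
      W γ = ((q ^ (-(γ.1 * γ.2)) : Kˣ) : K) • ((x ^ γ.1 * y ^ γ.2 : Aˣ) : A)) :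
    ∀ α β : ℤ × ℤ,
      W α * W β - W β * W α =
        (((q ^ (α.1 * β.2 - α.2 * β.1) : Kˣ) : K)
          - ((q ^ (-(α.1 * β.2 - α.2 * β.1)) : Kˣ) : K)) • W (α + β) := by
  let φ : Kˣ →* Aˣ := Units.map (algebraMap K A).toMonoidHom
  have hφ (r : Kˣ) (u : Aˣ) : ((φ r * u : Aˣ) : A) = (r : K) • (u : A) :=
    (Algebra.smul_def (r : K) (u : A)).symm
  have hcomm (u : Aˣ) : Commute (φ q) u := Units.ext (Algebra.commutes (q : K) (u : A))
  have hxy' : x * y = φ q ^ 2 * (y * x) := by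
    rw [← map_pow]
    ext
    rw [hφ, Units.val_mul, Units.val_mul, Units.val_pow_eq_pow_val, hxy]
  have hmul (γ δ : ℤ × ℤ) :
      W γ * W δ = ((q ^ (γ.1 * δ.2 - γ.2 * δ.1) : Kˣ) : K) • W (γ + δ) := by
    simp only [hW, ← hφ, ← Units.val_mul, map_zpow]
    exact congrArg Units.val
      (normalized_monomial_mul (hcomm x) (hcomm y) hxy' γ.1 γ.2 δ.1 δ.2)
  intro α β
  have hneg : β.1 * α.2 - β.2 * α.1 = -(α.1 * β.2 - α.2 * β.1) := by ring
  rw [hmul, hmul, add_comm β α, hneg, sub_smul]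
end

section
/- Let K be a field, let q be an invertible element of K, let A be an associative unital K-algebra, and let x, y be units of A satisfying x·y = q²·(y·x). For α = (α₁, α₂) ∈ ℤ² define W(α) = q^{−α₁α₂}·x^{α₁}·y^{α₂}. If α, β ∈ ℤ² are collinear, i.e. α₁β₂ = α₂β₁, then W(α) and W(β) commute: W(α)·W(β) = W(β)·W(α). In particular, for a fixed γ ∈ ℤ² the elements W(nγ), n ∈ ℤ, pairwise commute. -/
/-- If `x * y = c * (y * x)` with `c` commuting with `x` and `y`, then moving `x ^ m` past `y ^ n`
costs a factor `c ^ (n * m)`. -/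
theorem zpow_mul_zpow_of_mul_eq_mul_mul {G : Type*} [Group G] {c x y : G}
    (hcx : Commute c x) (hcy : Commute c y) (h : x * y = c * (y * x)) (m n : ℤ) :
    x ^ m * y ^ n = c ^ (n * m) * (y ^ n * x ^ m) := by
  have hx : SemiconjBy x (y ^ n) ((c * y) ^ n) :=
    SemiconjBy.zpow_right (h.trans (mul_assoc c y x).symm) n
  rw [hcy.mul_zpow] at hx
  have hcyn : Commute (c ^ n) (y ^ n) := hcy.zpow_zpow n n
  have hy : SemiconjBy (y ^ n) (c ^ n * x) x := by
    rw [SemiconjBy, hx.eq, hcyn.eq, mul_assoc]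
  have key := (hy.zpow_right m).eq
  rw [(hcx.zpow_left n).mul_zpow, ← zpow_mul] at key
  rw [← key, ← mul_assoc, ← mul_assoc, (hcy.zpow_zpow (n * m) n).eq]

/-- In a group with `x * y = c * (y * x)` and `c` commuting with `x` and `y`, monomials in `x` and
`y` with collinear exponents commute. -/
theorem commute_zpow_mul_zpow_of_collinear {G : Type*} [Group G] {c x y : G}
    (hcx : Commute c x) (hcy : Commute c y) (h : x * y = c * (y * x)) {a b a' b' : ℤ}
    (hab : a * b' = b * a') : Commute (x ^ a * y ^ b) (x ^ a' * y ^ b') := by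
  have normal_form (i j k l : ℤ) :
      c ^ (j * k) * (x ^ i * y ^ j * (x ^ k * y ^ l)) = x ^ (i + k) * y ^ (j + l) := by
    have hc : c ^ (j * k) * x ^ i = x ^ i * c ^ (j * k) := (hcx.zpow_zpow _ _).eq
    calc c ^ (j * k) * (x ^ i * y ^ j * (x ^ k * y ^ l))
        = c ^ (j * k) * x ^ i * (y ^ j * x ^ k) * y ^ l := by simp only [mul_assoc]
      _ = x ^ i * (c ^ (j * k) * (y ^ j * x ^ k)) * y ^ l := by rw [hc]; simp only [mul_assoc]
      _ = x ^ (i + k) * y ^ (j + l) := by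
        rw [← zpow_mul_zpow_of_mul_eq_mul_mul hcx hcy h, zpow_add, zpow_add]
        simp only [mul_assoc]
  apply mul_left_cancel (a := c ^ (b * a'))
  rw [normal_form, ← hab, mul_comm a b', normal_form, add_comm a, add_comm b]

/-- **Collinear quantum-torus monomials commute.**
`K` a field, `q` an invertible scalar, `A` an associative unital `K`-algebra, and
`x, y` units of `A` with `x * y = q ^ 2 • (y * x)`.  For `α = (α₁, α₂) ∈ ℤ²` set
`W α = q ^ (-α₁ α₂) • x ^ α₁ * y ^ α₂`.  If `α, β` are collinear, i.e.
`α₁ β₂ = α₂ β₁`, then `W α` and `W β` commute; in particular, for fixed `γ ∈ ℤ²`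
the elements `W (n • γ)`, `n ∈ ℤ`, pairwise commute. -/
theorem quantum_torus_collinear_commute {K A : Type*} [Field K] [Ring A] [Algebra K A]
    (q : Kˣ) (x y : Aˣ)
    (hxy : (x : A) * (y : A) = ((q : K) ^ 2) • ((y : A) * (x : A)))
    (W : ℤ × ℤ → A)
    (hW : ∀ γ : ℤ × ℤ,
      W γ = ((q ^ (-(γ.1 * γ.2)) : Kˣ) : K) • ((x ^ γ.1 * y ^ γ.2 : Aˣ) : A)) :
    (∀ α β : ℤ × ℤ, α.1 * β.2 = α.2 * β.1 → W α * W β = W β * W α) ∧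
    (∀ (γ : ℤ × ℤ) (m n : ℤ), W (m • γ) * W (n • γ) = W (n • γ) * W (m • γ)) := by
  have collinear (α β : ℤ × ℤ) (h : α.1 * β.2 = α.2 * β.1) : W α * W β = W β * W α := by
    let c : Aˣ := Units.map (algebraMap K A : K →* A) (q ^ 2)
    have hc (u : Aˣ) : Commute c u := Units.ext (Algebra.commutes _ _)
    have hrel : x * y = c * (y * x) := by
      ext
      simpa [c, Algebra.smul_def] using hxy
    have hcomm := congrArg Units.val
      (commute_zpow_mul_zpow_of_collinear (hc x) (hc y) hrel h).eq
    rw [Units.val_mul, Units.val_mul (x ^ β.1 * y ^ β.2)] at hcomm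
    rw [hW, hW, smul_mul_smul_comm, smul_mul_smul_comm, hcomm, mul_comm (Units.val (q ^ _))]
  refine ⟨collinear, fun γ m n => collinear _ _ ?_⟩
  simp only [Prod.smul_fst, Prod.smul_snd, smul_eq_mul]
  ring
end

section
/- Let K be a field and q ∈ K an invertible element. Let V be the K-vector space with basis consisting of symbols w_α for α ∈ ℤ² together with two further basis vectors c₁, c₂. Define a K-bilinear bracket on V by [w_α, w_β] = (q^{α₁β₂ − α₂β₁} − q^{−(α₁β₂ − α₂β₁)})·w_{α+β} when α + β ≠ (0,0), [w_α, w_{−α}] = α₁·c₁ + α₂·c₂, and [c_i, v] = [v, c_i] = 0 for all v ∈ V, i = 1, 2. Then this bracket is alternating and satisfies the Jacobi identity, so V is a Lie algebra over K (the trigonometric / quantum-torus Lie algebra with two central charges). -/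
namespace QuantumTorus

variable {K : Type*} [Field K]

/-- The cross product on `ℤ²`. -/
def cross (α β : ℤ × ℤ) : ℤ := α.1 * β.2 - α.2 * β.1

/-- The structure constant `q ^ n - q ^ (-n)`. -/
def coeff (q : Kˣ) (n : ℤ) : K := ((q ^ n : Kˣ) : K) - ((q ^ (-n) : Kˣ) : K)

/-- The central element `α₁ c₁ + α₂ c₂`. -/
noncomputable def central (K : Type*) [Field K] (α : ℤ × ℤ) : ((ℤ × ℤ) ⊕ Fin 2) →₀ K :=
  (α.1 : K) • Finsupp.single (Sum.inr (0 : Fin 2)) (1 : K)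
    + (α.2 : K) • Finsupp.single (Sum.inr (1 : Fin 2)) (1 : K)

/-- The bracket of two basis vectors. -/
noncomputable def basisBracket (q : Kˣ) :
    (ℤ × ℤ) ⊕ Fin 2 → (ℤ × ℤ) ⊕ Fin 2 → (((ℤ × ℤ) ⊕ Fin 2) →₀ K)
  | Sum.inl α, Sum.inl β =>
      coeff q (cross α β) • Finsupp.single (Sum.inl (α + β)) (1 : K)
        + if α + β = 0 then central K α else 0
  | _, _ => 0

/-- The bilinear extension of `basisBracket`. -/
noncomputable def bracket (q : Kˣ) : (((ℤ × ℤ) ⊕ Fin 2) →₀ K) →ₗ[K]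
    (((ℤ × ℤ) ⊕ Fin 2) →₀ K) →ₗ[K] (((ℤ × ℤ) ⊕ Fin 2) →₀ K) :=
  Finsupp.linearCombination K fun i => Finsupp.linearCombination K (basisBracket q i)

theorem coeff_zero (q : Kˣ) : coeff q 0 = 0 := by simp [coeff]

theorem coeff_neg (q : Kˣ) (n : ℤ) : coeff q (-n) = -coeff q n := by simp [coeff]

theorem coeff_jacobi (q : Kˣ) (a b c : ℤ) :
    coeff q b * coeff q (a - c) + coeff q c * coeff q (b - a)
      + coeff q a * coeff q (c - b) = 0 := by
  simp only [coeff, neg_sub, zpow_sub, zpow_neg, Units.val_mul]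
  generalize q ^ a = x
  generalize q ^ b = y
  generalize q ^ c = z
  ring

theorem cross_self (α : ℤ × ℤ) : cross α α = 0 := by simp [cross, mul_comm]

theorem cross_swap (α β : ℤ × ℤ) : cross β α = -cross α β := by simp only [cross]; ring

theorem cross_add_right (α β γ : ℤ × ℤ) : cross α (β + γ) = cross α β + cross α γ := by
  simp only [cross, Prod.fst_add, Prod.snd_add]; ring

theorem cross_eq_zero_of_add_eq_zero {α β : ℤ × ℤ} (h : α + β = 0) : cross α β = 0 := by
  rw [eq_neg_of_add_eq_zero_right h]
  simp only [cross, Prod.fst_neg, Prod.snd_neg]; ring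

theorem central_add (α β : ℤ × ℤ) : central K (α + β) = central K α + central K β := by
  simp only [central, Prod.fst_add, Prod.snd_add, Int.cast_add]; module

theorem central_zero : central K 0 = 0 := by simp [central]

theorem bracket_single (q : Kˣ) (i j : (ℤ × ℤ) ⊕ Fin 2) :
    bracket q (Finsupp.single i 1) (Finsupp.single j 1) = basisBracket q i j := by
  simp [bracket]

theorem bracket_single_inr_left (q : Kˣ) (i : Fin 2) (v : ((ℤ × ℤ) ⊕ Fin 2) →₀ K) :
    bracket q (Finsupp.single (Sum.inr i) 1) v = 0 := by
  simp [bracket, basisBracket, Finsupp.linearCombination_apply]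

theorem bracket_single_inr_right (q : Kˣ) (i : Fin 2) (v : ((ℤ × ℤ) ⊕ Fin 2) →₀ K) :
    bracket q v (Finsupp.single (Sum.inr i) 1) = 0 := by
  induction v using Finsupp.induction_linear with
  | zero => simp
  | add u v hu hv => simp [hu, hv]
  | single j a => cases j <;> simp [bracket, basisBracket]

theorem bracket_central_right (q : Kˣ) (v : ((ℤ × ℤ) ⊕ Fin 2) →₀ K) (α : ℤ × ℤ) :
    bracket q v (central K α) = 0 := by
  simp only [central, map_add, map_smul, bracket_single_inr_right, smul_zero, add_zero]

theorem basisBracket_swap (q : Kˣ) (i j : (ℤ × ℤ) ⊕ Fin 2) :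
    basisBracket q j i = -basisBracket q i j := by
  rcases i with α | i <;> rcases j with β | j <;> simp only [basisBracket, neg_zero]
  rw [cross_swap α β, coeff_neg, add_comm β α]
  split_ifs with h
  · have hc := central_add (K := K) α β
    rw [h, central_zero] at hc
    rw [eq_neg_of_add_eq_zero_right hc.symm]
    module
  · module

theorem bracket_swap (q : Kˣ) (u v : ((ℤ × ℤ) ⊕ Fin 2) →₀ K) :
    bracket q v u = -bracket q u v := by
  have h : (bracket q).flip + bracket q = 0 := by
    ext i j : 4
    simp [bracket_single, basisBracket_swap q i j]
  exact eq_neg_of_add_eq_zero_left (LinearMap.congr_fun₂ h u v)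

theorem basisBracket_self (q : Kˣ) (i : (ℤ × ℤ) ⊕ Fin 2) : basisBracket q i i = 0 := by
  rcases i with α | i <;> simp only [basisBracket]
  rw [cross_self, coeff_zero, zero_smul, zero_add]
  split_ifs with h
  · have : α = 0 := self_eq_neg.mp (eq_neg_of_add_eq_zero_left h)
    rw [this, central_zero]
  · rfl

theorem bracket_self (q : Kˣ) (v : ((ℤ × ℤ) ⊕ Fin 2) →₀ K) : bracket q v v = 0 := by
  induction v using Finsupp.induction_linear with
  | zero => simp
  | add u v hu hv => simp [hu, hv, bracket_swap q u v]
  | single i a => simp [bracket, basisBracket_self]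

theorem bracket_bracket_single_inl (q : Kˣ) (α β γ : ℤ × ℤ) :
    bracket q (Finsupp.single (Sum.inl α) 1)
        (bracket q (Finsupp.single (Sum.inl β) 1) (Finsupp.single (Sum.inl γ) 1)) =
      (coeff q (cross β γ) * coeff q (cross α β - cross γ α)) •
          Finsupp.single (Sum.inl (α + β + γ)) (1 : K)
        + coeff q (cross β γ) • if α + β + γ = 0 then central K α else 0 := by
  have hc : bracket q (Finsupp.single (Sum.inl α) 1)
      (if β + γ = 0 then central K β else 0) = 0 := by
    split_ifs <;> simp [bracket_central_right]
  rw [bracket_single, basisBracket, map_add, map_smul, hc, bracket_single, basisBracket,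
    cross_add_right, cross_swap γ α, ← add_assoc α, smul_add, smul_smul, add_zero, sub_eq_add_neg]

theorem jacobi_single (q : Kˣ) (i j k : (ℤ × ℤ) ⊕ Fin 2) :
    bracket q (Finsupp.single i 1) (bracket q (Finsupp.single j 1) (Finsupp.single k 1))
      + bracket q (Finsupp.single j 1) (bracket q (Finsupp.single k 1) (Finsupp.single i 1))
      + bracket q (Finsupp.single k 1) (bracket q (Finsupp.single i 1) (Finsupp.single j 1))
      = 0 := by
  rcases i with α | i
  · rcases j with β | j
    · rcases k with γ | k
      · rw [bracket_bracket_single_inl, bracket_bracket_single_inl, bracket_bracket_single_inl,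
          show β + γ + α = α + β + γ by abel, show γ + α + β = α + β + γ by abel]
        have hw := congrArg (· • Finsupp.single (Sum.inl (α + β + γ) : (ℤ × ℤ) ⊕ Fin 2) (1 : K))
          (coeff_jacobi q (cross α β) (cross β γ) (cross γ α))
        simp only [add_smul, zero_smul] at hw
        split_ifs with h
        · have hγ : γ = -(α + β) := eq_neg_of_add_eq_zero_right h
          have hβγ : cross β γ = cross α β := by
            rw [hγ]; simp only [cross, Prod.fst_neg, Prod.snd_neg, Prod.fst_add, Prod.snd_add]; ring
          have hγα : cross γ α = cross α β := by
            rw [hγ]; simp only [cross, Prod.fst_neg, Prod.snd_neg, Prod.fst_add, Prod.snd_add]; ring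
          have hs : central K α + central K β + central K γ = 0 := by
            rw [← central_add, ← central_add, h, central_zero]
          rw [hβγ, hγα] at hw ⊢
          linear_combination (norm := module) hw + coeff q (cross α β) • hs
        · simpa using hw
      · simp [bracket_single_inr_left, bracket_single_inr_right]
    · simp [bracket_single_inr_left, bracket_single_inr_right]
  · simp [bracket_single_inr_left, bracket_single_inr_right]

theorem jacobi (q : Kˣ) (u v w : ((ℤ × ℤ) ⊕ Fin 2) →₀ K) :
    bracket q u (bracket q v w) + bracket q v (bracket q w u)
      + bracket q w (bracket q u v) = 0 := by
  have single_eq (i : (ℤ × ℤ) ⊕ Fin 2) (a : K) :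
      Finsupp.single i a = a • Finsupp.single i (1 : K) := by simp
  induction u using Finsupp.induction_linear with
  | zero => simp
  | add u u' hu hu' =>
    simp only [map_add, LinearMap.add_apply]
    linear_combination (norm := module) hu + hu'
  | single i a =>
  induction v using Finsupp.induction_linear with
  | zero => simp
  | add v v' hv hv' =>
    simp only [map_add, LinearMap.add_apply]
    linear_combination (norm := module) hv + hv'
  | single j b =>
  induction w using Finsupp.induction_linear with
  | zero => simp
  | add w w' hw hw' =>
    simp only [map_add, LinearMap.add_apply]
    linear_combination (norm := module) hw + hw'
  | single k c =>
    rw [single_eq i a, single_eq j b, single_eq k c]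
    simp only [map_smul, LinearMap.smul_apply]
    linear_combination (norm := module) (a * b * c) • jacobi_single q i j k

end QuantumTorus

/-- **The quantum-torus (sine) Lie algebra with two central charges.**
Let `K` be a field and `q ∈ Kˣ`.  Let `V` be the `K`-vector space with basis
`w_α` (`α ∈ ℤ²`) together with `c₁, c₂`, realized as the free `K`-module
`V = ((ℤ × ℤ) ⊕ Fin 2) →₀ K` with `w α = single (inl α) 1` and
`c i = single (inr i) 1`.  There is a `K`-bilinear bracket `B` on `V` with
`B (w α) (w β) = (q^(α×β) - q^(-(α×β))) • w (α+β)` for `α + β ≠ 0`,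
`B (w α) (w (-α)) = α₁ • c₁ + α₂ • c₂`, and `c₁, c₂` central; and any such
bracket is alternating and satisfies the Jacobi identity, making `V` a Lie
algebra over `K`. -/
theorem quantum_torus_lie_algebra {K : Type*} [Field K] (q : Kˣ) :
    ∃ B : (((ℤ × ℤ) ⊕ Fin 2) →₀ K) →ₗ[K]
          (((ℤ × ℤ) ⊕ Fin 2) →₀ K) →ₗ[K] (((ℤ × ℤ) ⊕ Fin 2) →₀ K),
      (∀ α β : ℤ × ℤ, α + β ≠ 0 →
          B (Finsupp.single (Sum.inl α) 1) (Finsupp.single (Sum.inl β) 1) =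
            (((q ^ (α.1 * β.2 - α.2 * β.1) : Kˣ) : K)
              - ((q ^ (-(α.1 * β.2 - α.2 * β.1)) : Kˣ) : K)) •
              Finsupp.single (Sum.inl (α + β)) (1 : K)) ∧
      (∀ α : ℤ × ℤ,
          B (Finsupp.single (Sum.inl α) 1) (Finsupp.single (Sum.inl (-α)) 1) =
            (α.1 : K) • Finsupp.single (Sum.inr (0 : Fin 2)) (1 : K)
              + (α.2 : K) • Finsupp.single (Sum.inr (1 : Fin 2)) (1 : K)) ∧
      (∀ (i : Fin 2) (v : ((ℤ × ℤ) ⊕ Fin 2) →₀ K),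
          B (Finsupp.single (Sum.inr i) 1) v = 0 ∧
          B v (Finsupp.single (Sum.inr i) 1) = 0) ∧
      (∀ v, B v v = 0) ∧
      (∀ u v w, B u (B v w) + B v (B w u) + B w (B u v) = 0) := by
  refine ⟨QuantumTorus.bracket q, fun α β h => ?_, fun α => ?_, fun i v =>
    ⟨QuantumTorus.bracket_single_inr_left q i v, QuantumTorus.bracket_single_inr_right q i v⟩,
    QuantumTorus.bracket_self q, QuantumTorus.jacobi q⟩
  · rw [QuantumTorus.bracket_single, QuantumTorus.basisBracket, if_neg h, add_zero]
    rfl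
  · rw [QuantumTorus.bracket_single, QuantumTorus.basisBracket, if_pos (add_neg_cancel α),
      QuantumTorus.cross_eq_zero_of_add_eq_zero (add_neg_cancel α), QuantumTorus.coeff_zero,
      zero_smul, zero_add]
    rfl
end

section
/- Let K be a field, let m, n be natural numbers, and let q ∈ K be such that the q-Pochhammer symbols (q;q)_j := ∏_{i=1}^{j} (1 − q^i) are nonzero for all j ≤ max(m, n). Then q^{mn} / ((q;q)_m · (q;q)_n) = ∑_{k=0}^{min(m,n)} (−1)^k · q^{k(k−1)/2} / ((q;q)_{m−k} · (q;q)_k · (q;q)_{n−k}). -/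
open Finset

/-- The Gaussian binomial coefficient, defined by the `q`-Pascal recursion. -/
def gaussBinom {R : Type*} [CommRing R] (q : R) : ℕ → ℕ → R
  | _, 0 => 1
  | 0, _ + 1 => 0
  | m + 1, k + 1 => gaussBinom q m k + q ^ (k + 1) * gaussBinom q m (k + 1)

section GaussBinom

variable {R : Type*} [CommRing R] (q : R)

@[simp]
theorem gaussBinom_zero_right (m : ℕ) : gaussBinom q m 0 = 1 := by
  cases m <;> rfl

theorem gaussBinom_succ_succ (m k : ℕ) :
    gaussBinom q (m + 1) (k + 1) =
      gaussBinom q m k + q ^ (k + 1) * gaussBinom q m (k + 1) := rfl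

theorem gaussBinom_eq_zero_of_lt {m k : ℕ} (h : m < k) : gaussBinom q m k = 0 := by
  induction m generalizing k with
  | zero =>
    obtain ⟨k, rfl⟩ := Nat.exists_eq_succ_of_ne_zero h.ne'
    rfl
  | succ m ih =>
    obtain ⟨k, rfl⟩ := Nat.exists_eq_succ_of_ne_zero (Nat.ne_zero_of_lt h)
    rw [gaussBinom_succ_succ, ih (by lia), ih (by lia), mul_zero, add_zero]

@[simp]
theorem gaussBinom_self (m : ℕ) : gaussBinom q m m = 1 := by
  induction m with
  | zero => rfl
  | succ m ih => rw [gaussBinom_succ_succ, ih, gaussBinom_eq_zero_of_lt q m.lt_succ_self,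
      mul_zero, add_zero]

/-- The product formula for Gaussian binomial coefficients, cleared of denominators. -/
theorem gaussBinom_add_mul_prod (a b : ℕ) :
    gaussBinom q (a + b) a *
        ((∏ i ∈ range a, (1 - q ^ (i + 1))) * ∏ i ∈ range b, (1 - q ^ (i + 1))) =
      ∏ i ∈ range (a + b), (1 - q ^ (i + 1)) := by
  induction b generalizing a with
  | zero => simp
  | succ b ihb =>
    induction a with
    | zero => simp
    | succ a iha =>
      have hb := ihb (a + 1)
      rw [show a + 1 + b = a + (b + 1) by ring] at hb
      rw [show a + 1 + (b + 1) = a + (b + 1) + 1 by ring, gaussBinom_succ_succ,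
        prod_range_succ _ (a + (b + 1))]
      rw [prod_range_succ _ a] at hb ⊢
      rw [prod_range_succ _ b] at iha ⊢
      linear_combination (1 - q ^ (a + 1)) * iha + q ^ (a + 1) * (1 - q ^ (b + 1)) * hb

/-- Expansion of a power in the basis `∏_{i<k} (x - q^i)`, due to Cauchy. -/
theorem pow_eq_sum_gaussBinom_mul_prod (x : R) (m : ℕ) :
    x ^ m = ∑ k ∈ range (m + 1), gaussBinom q m k * ∏ i ∈ range k, (x - q ^ i) := by
  induction m with
  | zero => simp
  | succ m ih =>
    have hshift := sum_range_succ'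
      (fun k ↦ q ^ k * gaussBinom q m k * ∏ i ∈ range k, (x - q ^ i)) (m + 1)
    rw [sum_range_succ, gaussBinom_eq_zero_of_lt q m.lt_succ_self] at hshift
    simp only [mul_zero, zero_mul, add_zero, pow_zero, gaussBinom_zero_right, range_zero,
      prod_empty, mul_one] at hshift
    rw [sum_range_succ', pow_succ, ih, sum_mul]
    simp only [gaussBinom_succ_succ, add_mul, sum_add_distrib, gaussBinom_zero_right, range_zero,
      prod_empty, mul_one]
    rw [add_assoc, ← hshift, ← sum_add_distrib]
    refine sum_congr rfl fun k _ ↦ ?_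
    rw [prod_range_succ]
    ring

theorem prod_pow_sub_pow_eq_zero {n k : ℕ} (h : n < k) :
    ∏ i ∈ range k, (q ^ n - q ^ i) = 0 :=
  prod_eq_zero (mem_range.mpr h) (sub_self _)

theorem prod_pow_sub_pow_mul_prod (k b : ℕ) :
    (∏ i ∈ range k, (q ^ (k + b) - q ^ i)) * ∏ i ∈ range b, (1 - q ^ (i + 1)) =
      (-1) ^ k * q ^ (k * (k - 1) / 2) * ∏ i ∈ range (k + b), (1 - q ^ (i + 1)) := by
  induction k generalizing b with
  | zero => simp
  | succ k ih =>
    have hb := ih (b + 1)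
    rw [prod_range_succ _ b, show k + (b + 1) = k + 1 + b by ring] at hb
    have hexp : (k + 1) * (k + 1 - 1) / 2 = k + k * (k - 1) / 2 := by
      rw [← sum_range_id, ← sum_range_id, sum_range_succ, add_comm]
    rw [prod_range_succ, hexp]
    linear_combination (-q ^ k) * hb

end GaussBinom

/-- **Coefficient form of the Faddeev–Kashaev–Volkov pentagon identity.**
Let `K` be a field, `m n : ℕ`, and `q ∈ K` such that the finite q-Pochhammer
symbols `(q;q)_j = ∏_{i=1}^j (1 - q^i)` are nonzero for all `j ≤ max m n`.  Then
`q^(m n) / ((q;q)_m (q;q)_n)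
  = ∑_{k=0}^{min m n} (-1)^k q^(k(k-1)/2) / ((q;q)_{m-k} (q;q)_k (q;q)_{n-k})`. -/
theorem pentagon_coefficient_identity {K : Type*} [Field K] (q : K) (m n : ℕ)
    (hq : ∀ j ≤ max m n, (∏ i ∈ Finset.range j, (1 - q ^ (i + 1))) ≠ 0) :
    q ^ (m * n) /
        ((∏ i ∈ Finset.range m, (1 - q ^ (i + 1))) *
          (∏ i ∈ Finset.range n, (1 - q ^ (i + 1)))) =
      ∑ k ∈ Finset.range (min m n + 1),
        (-1 : K) ^ k * q ^ (k * (k - 1) / 2) /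
          ((∏ i ∈ Finset.range (m - k), (1 - q ^ (i + 1))) *
            (∏ i ∈ Finset.range k, (1 - q ^ (i + 1))) *
            (∏ i ∈ Finset.range (n - k), (1 - q ^ (i + 1)))) := by
  have hle : range (min m n + 1) ⊆ range (m + 1) :=
    range_subset_range.mpr (by lia)
  have hm := hq m (le_max_left m n)
  have hn := hq n (le_max_right m n)
  rw [mul_comm m n, pow_mul, pow_eq_sum_gaussBinom_mul_prod q (q ^ n) m, sum_div]
  symm
  refine sum_subset_zero_on_sdiff hle (fun k hk ↦ ?_) (fun k hk ↦ ?_)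
  · simp only [mem_sdiff, mem_range] at hk
    rw [prod_pow_sub_pow_eq_zero q (by lia), mul_zero, zero_div]
  · rw [mem_range] at hk
    obtain ⟨a, rfl⟩ : ∃ a, m = k + a := Nat.exists_eq_add_of_le (by lia)
    obtain ⟨b, rfl⟩ : ∃ b, n = k + b := Nat.exists_eq_add_of_le (by lia)
    have hk0 := hq k (by lia)
    have ha0 := hq a (by lia)
    have hb0 := hq b (by lia)
    rw [Nat.add_sub_cancel_left, Nat.add_sub_cancel_left,
      div_eq_div_iff (mul_ne_zero (mul_ne_zero ha0 hk0) hb0) (mul_ne_zero hm hn)]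
    rw [← gaussBinom_add_mul_prod q k a]
    linear_combination (-gaussBinom q (k + a) k * (∏ i ∈ range k, (1 - q ^ (i + 1))) *
      ∏ i ∈ range a, (1 - q ^ (i + 1))) * prod_pow_sub_pow_mul_prod q k b
end
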